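/- For z, y ∈ k^×, the formulas defining M_3(z,y) endow the 3-dimensional k-vector space with an H_k-module structure, and the H_k-module M_3(z,y) is simple if and only if y^3 ≠ z. -/

import Mathlib

/-- The defining relations of the affine Hecke algebra of type `A_2` (for `Gl_3`),
on the free algebra on four generators `T = X 0`, `T⁻¹ = X 1`, `S_1 = X 2`, `S_2 = X 3`. -/
inductive HeckeRel (R : Type) [CommRing R] (q : R) :
    FreeAlgebra R (Fin 4) → FreeAlgebra R (Fin 4) → Prop
  | TTinv : HeckeRel R q (FreeAlgebra.ι R 0 * FreeAlgebra.ι R 1) 1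
  | TinvT : HeckeRel R q (FreeAlgebra.ι R 1 * FreeAlgebra.ι R 0) 1
  | quad : HeckeRel R q
      ((FreeAlgebra.ι R 2 + 1) * (FreeAlgebra.ι R 2 - algebraMap R (FreeAlgebra R (Fin 4)) q)) 0
  | T3S1 : HeckeRel R q (FreeAlgebra.ι R 0 ^ 3 * FreeAlgebra.ι R 2)
      (FreeAlgebra.ι R 2 * FreeAlgebra.ι R 0 ^ 3)
  | braid : HeckeRel R q (FreeAlgebra.ι R 2 * FreeAlgebra.ι R 3 * FreeAlgebra.ι R 2)
      (FreeAlgebra.ι R 3 * FreeAlgebra.ι R 2 * FreeAlgebra.ι R 3)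
  | TS2 : HeckeRel R q (FreeAlgebra.ι R 0 * FreeAlgebra.ι R 3)
      (FreeAlgebra.ι R 2 * FreeAlgebra.ι R 0)

/-- The affine Hecke algebra `H_R` with parameter `q ∈ R`. -/
abbrev HeckeAlg (R : Type) [CommRing R] (q : R) := RingQuot (HeckeRel R q)

namespace HeckeAlg

variable (R : Type) [CommRing R] (q : R)

noncomputable def gen (i : Fin 4) : HeckeAlg R q :=
  RingQuot.mkAlgHom R (HeckeRel R q) (FreeAlgebra.ι R i)

noncomputable def T : HeckeAlg R q := gen R q 0
noncomputable def Tinv : HeckeAlg R q := gen R q 1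
noncomputable def S1 : HeckeAlg R q := gen R q 2
noncomputable def S2 : HeckeAlg R q := gen R q 3

theorem T_mul_Tinv : T R q * Tinv R q = 1 := by
  simpa [T, Tinv, gen, map_mul, map_one] using
    RingQuot.mkAlgHom_rel R (HeckeRel.TTinv (R := R) (q := q))

theorem Tinv_mul_T : Tinv R q * T R q = 1 := by
  simpa [T, Tinv, gen, map_mul, map_one] using
    RingQuot.mkAlgHom_rel R (HeckeRel.TinvT (R := R) (q := q))

theorem quad_rel : (S1 R q + 1) * (S1 R q - algebraMap R (HeckeAlg R q) q) = 0 := by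
  simpa [S1, gen, map_mul, map_add, map_sub, map_one, map_zero, AlgHom.commutes] using
    RingQuot.mkAlgHom_rel R (HeckeRel.quad (R := R) (q := q))

theorem T3_mul_S1 : T R q ^ 3 * S1 R q = S1 R q * T R q ^ 3 := by
  simpa [T, S1, gen, map_mul, map_pow] using
    RingQuot.mkAlgHom_rel R (HeckeRel.T3S1 (R := R) (q := q))

theorem braid_rel : S1 R q * S2 R q * S1 R q = S2 R q * S1 R q * S2 R q := by
  simpa [S1, S2, gen, map_mul] using
    RingQuot.mkAlgHom_rel R (HeckeRel.braid (R := R) (q := q))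

theorem T_mul_S2 : T R q * S2 R q = S1 R q * T R q := by
  simpa [T, S1, S2, gen, map_mul] using
    RingQuot.mkAlgHom_rel R (HeckeRel.TS2 (R := R) (q := q))

/-- The canonical (base change) ring homomorphism `H_R → H_S` induced by a ring
homomorphism `R → S` sending the parameter `q` to the parameter `q'`. -/
noncomputable def map {R S : Type} [CommRing R] [CommRing S] (f : R →+* S) (q : R) (q' : S)
    (h : f q = q') : HeckeAlg R q →+* HeckeAlg S q' := by
  subst h
  letI : Algebra R (HeckeAlg S (f q)) :=
    RingHom.toAlgebra' ((algebraMap S (HeckeAlg S (f q))).comp f)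
      (fun c x => by simpa using Algebra.commutes (f c) x)
  refine RingQuot.lift
    ⟨((FreeAlgebra.lift R fun i => gen S (f q) i : _ →ₐ[R] HeckeAlg S (f q)) :
        FreeAlgebra R (Fin 4) →+* HeckeAlg S (f q)), ?_⟩
  have key : ∀ i : Fin 4,
      (FreeAlgebra.lift R fun j => gen S (f q) j) (FreeAlgebra.ι R i) = gen S (f q) i :=
    fun i => FreeAlgebra.lift_ι_apply _ _
  have keyq : (FreeAlgebra.lift R fun j => gen S (f q) j)
      (algebraMap R (FreeAlgebra R (Fin 4)) q) = algebraMap S (HeckeAlg S (f q)) (f q) := by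
    rw [AlgHom.commutes]
    rfl
  intro a b hab
  cases hab with
  | TTinv => simpa [key, T, Tinv] using T_mul_Tinv S (f q)
  | TinvT => simpa [key, T, Tinv] using Tinv_mul_T S (f q)
  | quad => simpa [key, keyq, S1] using quad_rel S (f q)
  | T3S1 => simpa [key, T, S1] using T3_mul_S1 S (f q)
  | braid => simpa [key, S1, S2] using braid_rel S (f q)
  | TS2 => simpa [key, T, S1, S2] using T_mul_S2 S (f q)

/-- `S_1⁻¹ = q⁻¹ (S_1 - q + 1)`, where `qi` is an inverse of `q` in `R`. -/
noncomputable def S1i (qi : R) : HeckeAlg R q :=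
  algebraMap R (HeckeAlg R q) qi * (S1 R q - algebraMap R (HeckeAlg R q) q + 1)

/-- `S_2⁻¹ = q⁻¹ (S_2 - q + 1)`, where `qi` is an inverse of `q` in `R`. -/
noncomputable def S2i (qi : R) : HeckeAlg R q :=
  algebraMap R (HeckeAlg R q) qi * (S2 R q - algebraMap R (HeckeAlg R q) q + 1)

/-- The Bernstein elements `Y_1 = q S_1⁻¹ S_2⁻¹ T`, `Y_2 = S_2⁻¹ T S_1`,
`Y_3 = q⁻¹ T S_1 S_2`, where `qi` is an inverse of `q` in `R`. -/
noncomputable def Y (qi : R) : Fin 3 → HeckeAlg R q :=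
  ![algebraMap R (HeckeAlg R q) q * S1i R q qi * S2i R q qi * T R q,
    S2i R q qi * T R q * S1 R q,
    algebraMap R (HeckeAlg R q) qi * T R q * S1 R q * S2 R q]

end HeckeAlg

noncomputable section

variable (p : ℕ) [Fact p.Prime] (k : Type) [Field k] [IsAlgClosed k] [CharP k p]

/-- `H_k = H ⊗_{ℤ[q]} k` with `q ↦ 0`. -/
abbrev Hk : Type := HeckeAlg k 0

/-- The action of `T` on a `1`-dimensional space: multiplication by `c`. -/
def Tmat1 (c : k) : Module.End k (Fin 1 → k) := Matrix.mulVecLin !![c]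

/-- The action of `T` on the `2`-dimensional space with basis `w, Tw` where
`T(Tw) = -y²w - yTw`. -/
def Tmat2 (y : k) : Module.End k (Fin 2 → k) := Matrix.mulVecLin !![0, -y^2; 1, -y]

/-- The action of `T` on the `3`-dimensional space with basis `v, Tv, T²v` where
`T(T²v) = zv`. -/
def Tmat3 (z : k) : Module.End k (Fin 3 → k) := Matrix.mulVecLin !![0, 0, z; 1, 0, 0; 0, 1, 0]

/-- The action of `T` on the `6`-dimensional space with basis `v, Tv, T²v, w, Tw, T²w`
where `T(T²v) = zv`, `T(T²w) = zw`. -/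
def Tmat6 (z : k) : Module.End k (Fin 6 → k) := Matrix.mulVecLin
  !![0, 0, z, 0, 0, 0;
     1, 0, 0, 0, 0, 0;
     0, 1, 0, 0, 0, 0;
     0, 0, 0, 0, 0, z;
     0, 0, 0, 1, 0, 0;
     0, 0, 0, 0, 1, 0]

/-- The action of `S_1` on `L_6(z,y)`: `S_1v = 0`, `S_1(Tv) = T²w`, `S_1(T²v) = -T²v`,
`S_1w = -w`, `S_1(Tw) = (y/z)T²v`, `S_1(T²w) = -T²w`. -/
def SL6 (z y : k) : Module.End k (Fin 6 → k) := Matrix.mulVecLin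
  !![0, 0, 0,  0,  0,     0;
     0, 0, 0,  0,  0,     0;
     0, 0, -1, 0,  y / z, 0;
     0, 0, 0,  -1, 0,     0;
     0, 0, 0,  0,  0,     0;
     0, 1, 0,  0,  0,     -1]

/-- The action of `S_1` on `L̃_6(z,y)`: as on `L_6(z,y)` except `S_1v = w`, `S_1(Tv) = 0`. -/
def SLt6 (z y : k) : Module.End k (Fin 6 → k) := Matrix.mulVecLin
  !![0, 0, 0,  0,  0,     0;
     0, 0, 0,  0,  0,     0;
     0, 0, -1, 0,  y / z, 0;
     1, 0, 0,  -1, 0,     0;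
     0, 0, 0,  0,  0,     0;
     0, 0, 0,  0,  0,     -1]

/-- The action of `S_1` on `K_6(z,y,y')`: `S_1v = w`, `S_1(Tv) = (y/y')T²w`,
`S_1(T²v) = -T²v`, `S_1w = -w`, `S_1(Tw) = (y'/z)T²v`, `S_1(T²w) = -T²w`. -/
def SK6 (z y y' : k) : Module.End k (Fin 6 → k) := Matrix.mulVecLin
  !![0, 0,      0,  0,  0,      0;
     0, 0,      0,  0,  0,      0;
     0, 0,      -1, 0,  y' / z, 0;
     1, 0,      0,  -1, 0,      0;
     0, 0,      0,  0,  0,      0;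
     0, y / y', 0,  0,  0,      -1]

/-- The action of `S_1` on `M_3(z,y)`: `S_1v = 0`, `S_1(Tv) = y⁻¹T²v`, `S_1(T²v) = -T²v`. -/
def SM3 (y : k) : Module.End k (Fin 3 → k) := Matrix.mulVecLin
  !![0, 0, 0; 0, 0, 0; 0, y⁻¹, -1]

/-- The action of `S_1` on `M̃_3(z,y)`: `S_1v = -v`, `S_1(Tv) = -y⁻¹T²v`, `S_1(T²v) = -T²v`. -/
def SMt3 (y : k) : Module.End k (Fin 3 → k) := Matrix.mulVecLin
  !![-1, 0, 0; 0, 0, 0; 0, -y⁻¹, -1]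

/-- The action of `S_1` on `N_3(z,y)`: `S_1v = -v`, `S_1(Tv) = 0`, `S_1(T²v) = -yTv - T²v`. -/
def SN3 (y : k) : Module.End k (Fin 3 → k) := Matrix.mulVecLin
  !![-1, 0, 0; 0, 0, -y; 0, 0, -1]

/-- The action of `S_1` on `Ñ_3(z,y)`: `S_1v = 0`, `S_1(Tv) = 0`, `S_1(T²v) = yTv - T²v`. -/
def SNt3 (y : k) : Module.End k (Fin 3 → k) := Matrix.mulVecLin
  !![0, 0, 0; 0, 0, y; 0, 0, -1]

/-- The action of `S_1` on `P_3(z)`: `S_1v = 0`, `S_1(Tv) = 0`, `S_1(T²v) = -T²v`. -/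
def SP3 : Module.End k (Fin 3 → k) := Matrix.mulVecLin
  !![0, 0, 0; 0, 0, 0; 0, 0, -1]

/-- The action of `S_1` on `P̃_3(z)`: `S_1v = -v`, `S_1(Tv) = 0`, `S_1(T²v) = -T²v`. -/
def SPt3 : Module.End k (Fin 3 → k) := Matrix.mulVecLin
  !![-1, 0, 0; 0, 0, 0; 0, 0, -1]

/-- The action of `S_1` on `M_2(y)`: `S_1w = -w`, `S_1(Tw) = 0`. -/
def SM2 : Module.End k (Fin 2 → k) := Matrix.mulVecLin !![-1, 0; 0, 0]

/-- The action of `S_1` on `M̃_2(y)`: `S_1w = 0`, `S_1(Tw) = -Tw`. -/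
def SMt2 : Module.End k (Fin 2 → k) := Matrix.mulVecLin !![0, 0; 0, -1]

end

/-!
On `M_3(z,y)` the operator `S_1` has rank one: `S_1 x = φ(x) e`, where `e = T²v` and
`φ(x) = y⁻¹ x_1 - x_2` in the coordinates of the basis `v, Tv, T²v`. The quadratic relation says
`φ(e) = -1`, and `φ(Te) = 0` gives `S_1 T S_1 = 0`, which makes both sides of the braid relation
vanish.

Let `W` be stable under `T` and `S_1`. If `φ` does not vanish on `W`, then `e ∈ W`, and `W` is
everything because `e` is a cyclic vector for `T`. Otherwise `φ(Tⁿx) = 0` for all `n` and all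
`x ∈ W`. So simplicity means that only `x = 0` has `φ(Tⁿx) = 0` for all `n`. Up to the factor `y`,
the scalars `φ(x)`, `φ(Tx)`, `φ(T²x)` are the coordinates of `Tx - yx`; hence the vectors in
question form the `y`-eigenspace of `T`. As `T³ = z`, it is nonzero exactly when `y³ = z`, in which
case it contains `(y², y, 1)`.
-/

namespace HeckeAlg

theorem braid_of_mul_mul_eq_zero {A : Type*} [MonoidWithZero A] (t : Aˣ) {s : A}
    (h : s * t * s = 0) :
    s * (↑t⁻¹ * s * t) * s = ↑t⁻¹ * s * t * s * (↑t⁻¹ * s * t) :=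
  calc s * (↑t⁻¹ * s * t) * s = s * ↑t⁻¹ * (s * t * s) := by simp only [mul_assoc]
    _ = ↑t⁻¹ * (s * t * s) * (↑t⁻¹ * s * t) := by simp only [h, mul_zero, zero_mul]
    _ = ↑t⁻¹ * s * t * s * (↑t⁻¹ * s * t) := by simp only [mul_assoc]

section Lift

variable {R : Type} [CommRing R] {q : R} {A : Type*} [Ring A] [Algebra R A]

/-- The universal property of the affine Hecke algebra: an invertible `t` and an `s` satisfying the
relations of `T` and `S_1` determine an algebra homomorphism. As `S_2 = T⁻¹ S_1 T`, the image of
`S_2` is eliminated from the data. -/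
noncomputable def lift (t : Aˣ) (s : A) (hquad : (s + 1) * (s - algebraMap R A q) = 0)
    (hcomm : Commute (t ^ 3 : A) s)
    (hbraid : s * (↑t⁻¹ * s * t) * s = ↑t⁻¹ * s * t * s * (↑t⁻¹ * s * t)) :
    HeckeAlg R q →ₐ[R] A :=
  RingQuot.liftAlgHom R ⟨FreeAlgebra.lift R ![(t : A), ↑t⁻¹, s, ↑t⁻¹ * s * t], fun _ _ h => by
    cases h with
    | TTinv | TinvT => simp
    | quad => simpa using hquad
    | T3S1 => simpa using hcomm.eq
    | braid => simpa using hbraid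
    | TS2 => simp [mul_assoc]⟩

variable (t : Aˣ) (s : A) (hquad : (s + 1) * (s - algebraMap R A q) = 0)
  (hcomm : Commute (t ^ 3 : A) s)
  (hbraid : s * (↑t⁻¹ * s * t) * s = ↑t⁻¹ * s * t * s * (↑t⁻¹ * s * t))

@[simp]
theorem lift_T : lift t s hquad hcomm hbraid (T R q) = t := by
  simp [lift, T, gen]

@[simp]
theorem lift_S1 : lift t s hquad hcomm hbraid (S1 R q) = s := by
  simp [lift, S1, gen]

end Lift

section Generators

variable (R : Type) [CommRing R] (q : R)

theorem S2_eq : S2 R q = Tinv R q * S1 R q * T R q := by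
  rw [mul_assoc, ← T_mul_S2, ← mul_assoc, Tinv_mul_T, one_mul]

theorem adjoin_range_gen : Algebra.adjoin R (Set.range (gen R q)) = ⊤ := by
  have hrange : Set.range (gen R q) =
      RingQuot.mkAlgHom R (HeckeRel R q) '' Set.range (FreeAlgebra.ι R) :=
    Set.range_comp _ _
  rw [hrange, ← AlgHom.map_adjoin, FreeAlgebra.adjoin_range_ι, Algebra.map_top,
    AlgHom.range_eq_top]
  exact RingQuot.mkAlgHom_surjective R _

theorem adjoin_T_Tinv_S1 : Algebra.adjoin R {T R q, Tinv R q, S1 R q} = ⊤ := by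
  have hT : T R q ∈ Algebra.adjoin R {T R q, Tinv R q, S1 R q} :=
    Algebra.subset_adjoin (by simp)
  have hTinv : Tinv R q ∈ Algebra.adjoin R {T R q, Tinv R q, S1 R q} :=
    Algebra.subset_adjoin (by simp)
  have hS1 : S1 R q ∈ Algebra.adjoin R {T R q, Tinv R q, S1 R q} :=
    Algebra.subset_adjoin (by simp)
  have hS2 : S2 R q ∈ Algebra.adjoin R {T R q, Tinv R q, S1 R q} := by
    rw [S2_eq]
    exact mul_mem (mul_mem hTinv hS1) hT
  rw [eq_top_iff, ← adjoin_range_gen, Algebra.adjoin_le_iff, Set.range_subset_iff]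
  intro i
  fin_cases i
  · exact hT
  · exact hTinv
  · exact hS1
  · exact hS2

end Generators

end HeckeAlg

theorem mem_invtSubmodule_of_mul_eq_one {R M : Type*} [Ring R] [AddCommGroup M] [Module R M]
    [IsArtinian R M] {f g : Module.End R M} (hgf : g * f = 1) {W : Submodule R M}
    (hW : W ∈ f.invtSubmodule) : W ∈ g.invtSubmodule := by
  have hleft : Function.LeftInverse g f := LinearMap.congr_fun hgf
  have hinj : Function.Injective (f.restrict hW) :=
    fun _ _ h => Subtype.ext (hleft.injective (congrArg Subtype.val h))
  intro x hx
  obtain ⟨w, hw⟩ := IsArtinian.surjective_of_injective_endomorphism _ hinj ⟨x, hx⟩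
  obtain rfl : f w = x := congrArg Subtype.val hw
  simp [hleft (w : M)]

theorem HeckeAlg.forall_mem_invtSubmodule_iff {R : Type} [CommRing R] {q : R} {M : Type*}
    [AddCommGroup M] [Module R M] [IsArtinian R M] (ρ : HeckeAlg R q →ₐ[R] Module.End R M)
    {W : Submodule R M} :
    (∀ a, W ∈ (ρ a).invtSubmodule) ↔
      W ∈ (ρ (T R q)).invtSubmodule ∧ W ∈ (ρ (S1 R q)).invtSubmodule := by
  refine ⟨fun h => ⟨h _, h _⟩, fun ⟨hT, hS1⟩ a => ?_⟩
  have hTinv : W ∈ (ρ (Tinv R q)).invtSubmodule :=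
    mem_invtSubmodule_of_mul_eq_one (by rw [← map_mul, Tinv_mul_T, map_one]) hT
  have ha : a ∈ Algebra.adjoin R {T R q, Tinv R q, S1 R q} := adjoin_T_Tinv_S1 R q ▸ trivial
  induction ha using Algebra.adjoin_induction with
  | mem a ha => rcases ha with rfl | rfl | rfl <;> assumption
  | algebraMap r => exact fun x hx => by simpa using W.smul_mem r hx
  | add a b _ _ ha hb => exact fun x hx => by simpa using W.add_mem (ha hx) (hb hx)
  | mul a b _ _ ha hb => exact fun x hx => by simpa using ha (hb hx)

section Unobservable

variable {R M : Type*} [Semiring R] [AddCommMonoid M] [Module R M]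

/-- The vectors all of whose iterates under `T` are killed by `φ`; equivalently the largest
`T`-stable submodule of `ker φ`. In control theory this is the unobservable subspace of the pair
`(φ, T)`. -/
def unobservableSubmodule (φ : Module.Dual R M) (T : Module.End R M) : Submodule R M :=
  ⨅ n : ℕ, LinearMap.ker (φ ∘ₗ T ^ n)

variable {φ : Module.Dual R M} {T : Module.End R M}

theorem mem_unobservableSubmodule {x : M} :
    x ∈ unobservableSubmodule φ T ↔ ∀ n : ℕ, φ ((T ^ n) x) = 0 := by
  simp [unobservableSubmodule]

theorem unobservableSubmodule_le_ker : unobservableSubmodule φ T ≤ LinearMap.ker φ :=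
  fun _ hx => mem_unobservableSubmodule.1 hx 0

theorem unobservableSubmodule_mem_invtSubmodule :
    unobservableSubmodule φ T ∈ T.invtSubmodule := fun _ hx =>
  mem_unobservableSubmodule.2 fun n => mem_unobservableSubmodule.1 hx (n + 1)

theorem le_unobservableSubmodule {W : Submodule R M} (hT : W ∈ T.invtSubmodule)
    (hφ : W ≤ LinearMap.ker φ) : W ≤ unobservableSubmodule φ T := fun _ hx =>
  mem_unobservableSubmodule.2 fun n => hφ (Module.End.pow_apply_mem_of_forall_mem n hT _ hx)

end Unobservable

section RankOne

theorem smulRight_add_one_mul_smulRight {R M : Type*} [CommRing R] [AddCommGroup M] [Module R M]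
    {φ : Module.Dual R M} {e : M} (he : φ e = -1) :
    ((φ.smulRight e : Module.End R M) + 1) * φ.smulRight e = 0 := by
  ext x
  simp [he]

theorem smulRight_mul_mul_smulRight {R M : Type*} [CommSemiring R] [AddCommMonoid M] [Module R M]
    {φ : Module.Dual R M} {e : M} {T : Module.End R M} (he : φ (T e) = 0) :
    φ.smulRight e * T * φ.smulRight e = 0 := by
  ext x
  simp [he]

variable {K V : Type*} [DivisionRing K] [AddCommGroup V] [Module K V]
  {φ : Module.Dual K V} {e : V} {T : Module.End K V}

theorem eq_bot_or_eq_top_of_unobservableSubmodule_eq_bot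
    (he : Submodule.span K (Set.range fun n : ℕ => (T ^ n) e) = ⊤)
    (hobs : unobservableSubmodule φ T = ⊥) {W : Submodule K V} (hT : W ∈ T.invtSubmodule)
    (hS : W ∈ Module.End.invtSubmodule (φ.smulRight e)) : W = ⊥ ∨ W = ⊤ := by
  by_cases hφ : W ≤ LinearMap.ker φ
  · exact .inl (le_bot_iff.1 (hobs ▸ le_unobservableSubmodule hT hφ))
  · obtain ⟨x, hx, hφx⟩ := SetLike.not_le_iff_exists.1 hφ
    have heW : e ∈ W := (W.smul_mem_iff hφx).1 (hS hx)
    refine .inr (top_le_iff.1 (he ▸ Submodule.span_le.2 ?_))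
    rintro _ ⟨n, rfl⟩
    exact Module.End.pow_apply_mem_of_forall_mem n hT _ heW

theorem forall_eq_bot_or_eq_top_iff_unobservableSubmodule_eq_bot (hφ : φ ≠ 0)
    (he : Submodule.span K (Set.range fun n : ℕ => (T ^ n) e) = ⊤) :
    (∀ W : Submodule K V, W ∈ T.invtSubmodule ∧ W ∈ Module.End.invtSubmodule (φ.smulRight e) →
      W = ⊥ ∨ W = ⊤) ↔ unobservableSubmodule φ T = ⊥ := by
  refine ⟨fun hsimple => ?_, fun hobs W hW =>
    eq_bot_or_eq_top_of_unobservableSubmodule_eq_bot he hobs hW.1 hW.2⟩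
  refine (hsimple _ ⟨unobservableSubmodule_mem_invtSubmodule, fun x hx => ?_⟩).resolve_right
    fun htop => hφ (LinearMap.ker_eq_top.1 (top_le_iff.1 (htop ▸ unobservableSubmodule_le_ker)))
  simp [LinearMap.mem_ker.1 (unobservableSubmodule_le_ker hx)]

end RankOne

section M3

variable {k : Type} [Field k]

theorem Tmat3_apply (z : k) (x : Fin 3 → k) : Tmat3 k z x = ![z * x 2, x 0, x 1] := by
  ext i
  fin_cases i <;> simp [Tmat3, Matrix.mulVec, dotProduct, Fin.sum_univ_three]

theorem Tmat3_pow_three (z : k) : Tmat3 k z ^ 3 = algebraMap k (Module.End k (Fin 3 → k)) z := by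
  refine LinearMap.ext fun x => ?_
  ext i
  fin_cases i <;> simp [pow_succ, Tmat3_apply]

theorem isUnit_Tmat3 {z : k} (hz : z ≠ 0) : IsUnit (Tmat3 k z) := by
  rw [← isUnit_pow_iff three_ne_zero, Tmat3_pow_three]
  exact hz.isUnit.map _

theorem hasEigenvalue_Tmat3_iff {z μ : k} : (Tmat3 k z).HasEigenvalue μ ↔ μ ^ 3 = z := by
  constructor
  · intro h
    obtain ⟨x, hx⟩ := h.exists_hasEigenvector
    have hpow : z • x = μ ^ 3 • x := by
      rw [← hx.pow_apply, Tmat3_pow_three, Module.algebraMap_end_apply]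
    exact (smul_left_injective k hx.2 hpow).symm
  · rintro rfl
    refine Module.End.hasEigenvalue_of_hasEigenvector (x := ![μ ^ 2, μ, 1])
      (Module.End.hasEigenvector_iff.2 ⟨Module.End.mem_eigenspace_iff.2 ?_, fun h => ?_⟩)
    · ext i
      fin_cases i <;> simp [Tmat3_apply, pow_succ, mul_assoc]
    · simpa using congrFun h 2

theorem span_range_Tmat3_pow_single {z : k} (hz : z ≠ 0) :
    Submodule.span k (Set.range fun n : ℕ => (Tmat3 k z ^ n) (Pi.single 2 1)) = ⊤ := by
  refine eq_top_iff.2 fun x _ => ?_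
  have hx : x = x 2 • (Tmat3 k z ^ 0) (Pi.single 2 1) + (x 0 / z) • (Tmat3 k z ^ 1) (Pi.single 2 1)
      + (x 1 / z) • (Tmat3 k z ^ 2) (Pi.single 2 1) := by
    ext i
    fin_cases i <;> simp [pow_succ, Tmat3_apply, hz, Matrix.vecHead, Matrix.vecTail]
  rw [hx]
  have hmem (n : ℕ) := Submodule.subset_span (R := k)
    (Set.mem_range_self (f := fun n : ℕ => (Tmat3 k z ^ n) (Pi.single 2 1 : Fin 3 → k)) n)
  exact add_mem (add_mem (Submodule.smul_mem _ _ (hmem 0)) (Submodule.smul_mem _ _ (hmem 1)))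
    (Submodule.smul_mem _ _ (hmem 2))

/-- The linear form `φ` for which `S_1` acts on `M_3(z,y)` by `x ↦ φ(x) T²v`. -/
def m3Form (y : k) : Module.Dual k (Fin 3 → k) := y⁻¹ • LinearMap.proj 1 - LinearMap.proj 2

theorem m3Form_apply (y : k) (x : Fin 3 → k) : m3Form y x = y⁻¹ * x 1 - x 2 := rfl

theorem m3Form_single_two (y : k) : m3Form y (Pi.single 2 1) = -1 := by
  simp [m3Form_apply]

theorem m3Form_Tmat3_single_two (z y : k) : m3Form y (Tmat3 k z (Pi.single 2 1)) = 0 := by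
  simp [m3Form_apply, Tmat3_apply]

theorem SM3_eq_smulRight (y : k) : SM3 k y = (m3Form y).smulRight (Pi.single 2 1) := by
  refine LinearMap.ext fun x => ?_
  ext i
  fin_cases i <;>
    simp [SM3, m3Form_apply, Matrix.mulVec, dotProduct, Fin.sum_univ_three, sub_eq_add_neg]

theorem m3Form_eq_zero_iff {y : k} (hy : y ≠ 0) {x : Fin 3 → k} :
    m3Form y x = 0 ↔ x 1 = y * x 2 := by
  rw [m3Form_apply, sub_eq_zero, inv_mul_eq_iff_eq_mul₀ hy]

theorem unobservableSubmodule_m3Form_Tmat3 {y : k} (hy : y ≠ 0) (z : k) :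
    unobservableSubmodule (m3Form y) (Tmat3 k z) = (Tmat3 k z).eigenspace y := by
  apply le_antisymm
  · intro x hx
    have hφ (n : ℕ) := (m3Form_eq_zero_iff hy).1 (mem_unobservableSubmodule.1 hx n)
    have h0 : x 1 = y * x 2 := hφ 0
    have h1 : x 0 = y * x 1 := by simpa [Tmat3_apply] using hφ 1
    have h2 : z * x 2 = y * x 0 := by simpa [pow_two, Tmat3_apply] using hφ 2
    rw [Module.End.mem_eigenspace_iff, Tmat3_apply]
    ext i
    fin_cases i
    · exact h2
    · exact h1
    · exact h0
  · refine le_unobservableSubmodule (fun x hx => ?_) fun x hx => (m3Form_eq_zero_iff hy).2 ?_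
    · rw [Submodule.mem_comap, Module.End.mem_eigenspace_iff.1 hx]
      exact Submodule.smul_mem _ _ hx
    · simpa [Tmat3_apply] using congrFun (Module.End.mem_eigenspace_iff.1 hx) 2

/-- The module structure of `M_3(z,y)` over `H_k`. -/
noncomputable def m3Rep (z y : kˣ) : Hk k →ₐ[k] Module.End k (Fin 3 → k) :=
  HeckeAlg.lift (isUnit_Tmat3 z.ne_zero).unit (SM3 k y)
    (by rw [map_zero, sub_zero, SM3_eq_smulRight,
      smulRight_add_one_mul_smulRight (m3Form_single_two _)])
    (by rw [IsUnit.unit_spec, Tmat3_pow_three]; exact Algebra.commute_algebraMap_left _ _)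
    (HeckeAlg.braid_of_mul_mul_eq_zero _ <| by
      rw [IsUnit.unit_spec, SM3_eq_smulRight,
        smulRight_mul_mul_smulRight (m3Form_Tmat3_single_two _ _)])

end M3

theorem statement12_general (k : Type) [Field k] (z y : kˣ) :
    ∃ ρ : Hk k →ₐ[k] Module.End k (Fin 3 → k),
      ρ (HeckeAlg.T k 0) = Tmat3 k z ∧ ρ (HeckeAlg.S1 k 0) = SM3 k y ∧
      ((∀ W : Submodule k (Fin 3 → k), (∀ a : Hk k, ∀ x ∈ W, ρ a x ∈ W) → W = ⊥ ∨ W = ⊤) ↔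
        (y : k) ^ 3 ≠ z) := by
  have hT : m3Rep z y (HeckeAlg.T k 0) = Tmat3 k z := HeckeAlg.lift_T ..
  have hS : m3Rep z y (HeckeAlg.S1 k 0) = SM3 k y := HeckeAlg.lift_S1 ..
  have hφ : m3Form (y : k) ≠ 0 := fun h => by simpa [h] using m3Form_single_two (y : k)
  have hinv (W : Submodule k (Fin 3 → k)) : (∀ a, ∀ x ∈ W, m3Rep z y a x ∈ W) ↔
      W ∈ (Tmat3 k z).invtSubmodule ∧
        W ∈ Module.End.invtSubmodule ((m3Form (y : k)).smulRight (Pi.single 2 1)) := by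
    rw [← SM3_eq_smulRight, ← hT, ← hS]
    exact HeckeAlg.forall_mem_invtSubmodule_iff _
  refine ⟨m3Rep z y, hT, hS, ?_⟩
  simp only [hinv]
  rw [forall_eq_bot_or_eq_top_iff_unobservableSubmodule_eq_bot hφ
    (span_range_Tmat3_pow_single z.ne_zero), unobservableSubmodule_m3Form_Tmat3 y.ne_zero]
  exact iff_not_comm.1 (hasEigenvalue_Tmat3_iff (k := k)).symm

/-- For `z, y ∈ k^×`, the formulas defining `M_3(z,y)` endow the `3`-dimensional `k`-vector space with an `H_k`-module structure, and the `H_k`-module `M_3(z,y)` is simple if and only if `y³ ≠ z`. -/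
theorem statement12 (p : ℕ) [Fact p.Prime] (k : Type) [Field k] [IsAlgClosed k] [CharP k p]
    (z y : kˣ) :
    ∃ ρ : Hk k →ₐ[k] Module.End k (Fin 3 → k),
      ρ (HeckeAlg.T k 0) = Tmat3 k z ∧ ρ (HeckeAlg.S1 k 0) = SM3 k y ∧
      ((∀ W : Submodule k (Fin 3 → k), (∀ a : Hk k, ∀ x ∈ W, ρ a x ∈ W) → W = ⊥ ∨ W = ⊤) ↔ ((y : k) ^ 3 ≠ (z : k))) :=
  statement12_general k z y
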